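/- arXiv:2108.12487 — 6 statements merged into one kernel-verified Lean document; each statement's English description precedes it below -/
import Mathlib

section
/- Let x : ℕ → ℝ be a sequence of positive real numbers, let s_n = x_0 + ⋯ + x_n with s_{−1} = 0, and let g_n ∈ SL(2,ℝ) be the matrix [[(s_{n−1}+s_n)/(s_n−s_{n−1}), −2·s_{n−1}·s_n/(s_n−s_{n−1})], [−2/(s_n−s_{n−1}), (s_{n−1}+s_n)/(s_n−s_{n−1})]], acting on ℂ by Möbius transformations. Then for every n ∈ ℕ: g_n sends s_{n−1} to −s_{n−1} and s_n to −s_n; moreover, for every z ∈ ℂ with Im z > 0 and |z − (s_{n−1}+s_n)/2| = (s_n−s_{n−1})/2, the image w = g_n·z satisfies Im w > 0 and |w + (s_{n−1}+s_n)/2| = (s_n−s_{n−1})/2. That is, g_n maps the half-circle γ_n^+ with endpoints s_{n−1} and s_n onto the half-circle γ_n^− with endpoints −s_n and −s_{n−1}. -/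
/-- Partial sums of `x`: `sPartial x n = x 0 + ⋯ + x (n-1)`.  Thus
`sPartial x 0 = 0` realizes the convention `s_{-1} = 0`, and for `n ∈ ℕ`,
`s_n = sPartial x (n+1)` and `s_{n-1} = sPartial x n`. -/
noncomputable def sPartial (x : ℕ → ℝ) (n : ℕ) : ℝ := ∑ i ∈ Finset.range n, x i

/-- The matrix `g_n` of the paper, where `s_{n-1} = sPartial x n` and
`s_n = sPartial x (n+1)`:
`[[(s_{n−1}+s_n)/(s_n−s_{n−1}), −2·s_{n−1}·s_n/(s_n−s_{n−1})],
  [−2/(s_n−s_{n−1}), (s_{n−1}+s_n)/(s_n−s_{n−1})]]`. -/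
noncomputable def gMat (x : ℕ → ℝ) (n : ℕ) : Matrix (Fin 2) (Fin 2) ℝ :=
  !![(sPartial x n + sPartial x (n + 1)) / (sPartial x (n + 1) - sPartial x n),
      -2 * sPartial x n * sPartial x (n + 1) / (sPartial x (n + 1) - sPartial x n);
      -2 / (sPartial x (n + 1) - sPartial x n),
      (sPartial x n + sPartial x (n + 1)) / (sPartial x (n + 1) - sPartial x n)]

/-- The Möbius transformation of `ℂ` associated to a real 2×2 matrix
`[[α,β],[γ,δ]]`: `z ↦ (αz+β)/(γz+δ)`. -/
noncomputable def moebius (M : Matrix (Fin 2) (Fin 2) ℝ) (z : ℂ) : ℂ :=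
  ((M 0 0 : ℂ) * z + (M 0 1 : ℂ)) / ((M 1 0 : ℂ) * z + (M 1 1 : ℂ))

/-!
On the circle with diameter `[p, q]`, where `p = s_{n-1}` and `q = s_n`, the transformation `g_n`
coincides with the reflection `z ↦ -conj z` in the imaginary axis. Indeed the circle has the
equation `2 z conj z - (p + q) (z + conj z) + 2 p q = 0`, which rearranges to
`(p + q) z - 2 p q = -conj z (-2 z + (p + q))`, that is, to `g_n z = -conj z`. The endpoints are
real, so the reflection negates them, and it carries the half-circle over `[p, q]` onto the one
over `[-q, -p]`.
-/

open ComplexConjugate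

/-- The open upper half-circle with endpoints `p` and `q`, for `p < q`: a hyperbolic line, written
as a set of complex numbers so that `moebius` applies to it. -/
def halfCircle (p q : ℝ) : Set ℂ :=
  {z | 0 < z.im ∧ ‖z - (((p + q) / 2 : ℝ) : ℂ)‖ = (q - p) / 2}

/-- The matrix `g_n` for an arbitrary pair of endpoints `p`, `q` in place of `s_{n-1}`, `s_n`. Its
Möbius transformation acts as a mirror on the circle with diameter `[p, q]`. -/
noncomputable def mirrorMat (p q : ℝ) : Matrix (Fin 2) (Fin 2) ℝ :=
  !![(p + q) / (q - p), -2 * p * q / (q - p); -2 / (q - p), (p + q) / (q - p)]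

theorem gMat_eq_mirrorMat (x : ℕ → ℝ) (n : ℕ) :
    gMat x n = mirrorMat (sPartial x n) (sPartial x (n + 1)) :=
  rfl

theorem sPartial_lt_sPartial_succ {x : ℕ → ℝ} {n : ℕ} (hx : 0 < x n) :
    sPartial x n < sPartial x (n + 1) := by
  simpa only [sPartial, Finset.sum_range_succ, lt_add_iff_pos_right] using hx

section Mirror

variable {p q : ℝ}

theorem moebius_mirrorMat (hpq : p ≠ q) (z : ℂ) :
    moebius (mirrorMat p q) z = ((p + q) * z - 2 * p * q) / (-2 * z + (p + q)) := by
  have hd : (q - p : ℂ) ≠ 0 := sub_ne_zero.2 (Complex.ofReal_injective.ne hpq.symm)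
  have hnum : ((p + q) / (q - p) * z + -2 * p * q / (q - p) : ℂ) =
      ((p + q) * z - 2 * p * q) / (q - p) := by ring
  have hden : (-2 / (q - p) * z + (p + q) / (q - p) : ℂ) =
      (-2 * z + (p + q)) / (q - p) := by ring
  simp only [moebius, mirrorMat, Matrix.of_apply, Matrix.cons_val', Matrix.cons_val_zero,
    Matrix.cons_val_one, Matrix.cons_val_fin_one]
  push_cast
  rw [hnum, hden, div_div_div_cancel_right₀ hd]

theorem circle_equation_of_norm_sub_eq {z : ℂ}
    (hz : ‖z - (((p + q) / 2 : ℝ) : ℂ)‖ = |q - p| / 2) :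
    2 * z * conj z - (p + q) * (z + conj z) + 2 * p * q = 0 := by
  have hsq : (z - (p + q) / 2) * (conj z - (p + q) / 2) = ((q - p) / 2 : ℂ) ^ 2 := by
    have h := Complex.mul_conj' (z - (((p + q) / 2 : ℝ) : ℂ))
    rw [hz, ← Complex.ofReal_pow, div_pow, sq_abs, ← div_pow, map_sub, Complex.conj_ofReal] at h
    exact_mod_cast h
  linear_combination 2 * hsq

theorem moebius_mirrorMat_of_norm_sub_eq (hpq : p ≠ q) {z : ℂ}
    (hz : ‖z - (((p + q) / 2 : ℝ) : ℂ)‖ = |q - p| / 2) :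
    moebius (mirrorMat p q) z = -conj z := by
  have hcenter : z - (((p + q) / 2 : ℝ) : ℂ) ≠ 0 := by
    rw [← norm_pos_iff, hz]
    exact half_pos (abs_pos.2 (sub_ne_zero.2 hpq.symm))
  have hden : -2 * z + (p + q) ≠ 0 := by
    contrapose! hcenter
    push_cast
    linear_combination -hcenter / 2
  rw [moebius_mirrorMat hpq, div_eq_iff hden]
  linear_combination -circle_equation_of_norm_sub_eq hz

theorem moebius_mirrorMat_left (hpq : p ≠ q) : moebius (mirrorMat p q) p = -p := by
  have hp : ‖(p : ℂ) - (((p + q) / 2 : ℝ) : ℂ)‖ = |q - p| / 2 := by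
    rw [← Complex.ofReal_sub, Complex.norm_real, Real.norm_eq_abs,
      show p - (p + q) / 2 = -((q - p) / 2) by ring, abs_neg, abs_div, abs_two]
  rw [moebius_mirrorMat_of_norm_sub_eq hpq hp, Complex.conj_ofReal]

theorem moebius_mirrorMat_right (hpq : p ≠ q) : moebius (mirrorMat p q) q = -q := by
  have hq : ‖(q : ℂ) - (((p + q) / 2 : ℝ) : ℂ)‖ = |q - p| / 2 := by
    rw [← Complex.ofReal_sub, Complex.norm_real, Real.norm_eq_abs,
      show q - (p + q) / 2 = (q - p) / 2 by ring, abs_div, abs_two]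
  rw [moebius_mirrorMat_of_norm_sub_eq hpq hq, Complex.conj_ofReal]

theorem mem_halfCircle_neg_iff {w : ℂ} :
    w ∈ halfCircle (-q) (-p) ↔
      0 < w.im ∧ ‖w + (((p + q) / 2 : ℝ) : ℂ)‖ = (q - p) / 2 := by
  have hcenter : (-q + -p) / 2 = -((p + q) / 2) := by ring
  have hradius : (-p - -q) / 2 = (q - p) / 2 := by ring
  rw [halfCircle, Set.mem_ofPred_eq, hcenter, hradius, Complex.ofReal_neg, sub_neg_eq_add]

theorem neg_conj_mem_halfCircle_neg_iff {z : ℂ} :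
    -conj z ∈ halfCircle (-q) (-p) ↔ z ∈ halfCircle p q := by
  have hnorm (c : ℝ) : ‖-conj z + c‖ = ‖z - c‖ := by
    rw [neg_add_eq_sub, norm_sub_rev, ← Complex.norm_conj (z - c), map_sub, Complex.conj_ofReal]
  rw [mem_halfCircle_neg_iff, hnorm, Complex.neg_im, Complex.conj_im, neg_neg]
  rfl

theorem image_neg_conj_halfCircle (p q : ℝ) :
    (fun z : ℂ ↦ -conj z) '' halfCircle p q = halfCircle (-q) (-p) := by
  have hinv : Function.Involutive fun z : ℂ ↦ -conj z := fun z ↦ by simp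
  rw [Set.image_eq_preimage_of_inverse hinv.leftInverse hinv.rightInverse]
  ext w
  rw [Set.mem_preimage, ← neg_conj_mem_halfCircle_neg_iff, map_neg, Complex.conj_conj, neg_neg]

theorem image_moebius_mirrorMat_halfCircle (hpq : p < q) :
    moebius (mirrorMat p q) '' halfCircle p q = halfCircle (-q) (-p) := by
  rw [← image_neg_conj_halfCircle]
  refine Set.image_congr fun z hz ↦ moebius_mirrorMat_of_norm_sub_eq hpq.ne ?_
  rw [hz.2, abs_of_pos (sub_pos.2 hpq)]

end Mirror

theorem stmt6_general {p q : ℝ} (hpq : p < q) :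
    moebius (mirrorMat p q) p = -p ∧
      moebius (mirrorMat p q) q = -q ∧
      moebius (mirrorMat p q) '' halfCircle p q = halfCircle (-q) (-p) :=
  ⟨moebius_mirrorMat_left hpq.ne, moebius_mirrorMat_right hpq.ne,
    image_moebius_mirrorMat_halfCircle hpq⟩

/-- `g_n` sends `s_{n−1}` to `−s_{n−1}` and `s_n` to `−s_n`, and maps
the half-circle `γ_n^+` with endpoints `s_{n−1}, s_n` onto the half-circle `γ_n^−`
with endpoints `−s_n, −s_{n−1}`. -/
theorem stmt6 (x : ℕ → ℝ) (hx : ∀ n, 0 < x n) :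
    ∀ n : ℕ,
      moebius (gMat x n) ((sPartial x n : ℝ) : ℂ) = -((sPartial x n : ℝ) : ℂ) ∧
      moebius (gMat x n) ((sPartial x (n + 1) : ℝ) : ℂ) = -((sPartial x (n + 1) : ℝ) : ℂ) ∧
      ∀ z : ℂ, 0 < z.im →
        ‖z - (((sPartial x n + sPartial x (n + 1)) / 2 : ℝ) : ℂ)‖ =
          (sPartial x (n + 1) - sPartial x n) / 2 →
        0 < (moebius (gMat x n) z).im ∧
        ‖moebius (gMat x n) z + (((sPartial x n + sPartial x (n + 1)) / 2 : ℝ) : ℂ)‖ =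
          (sPartial x (n + 1) - sPartial x n) / 2 := by
  intro n
  rw [gMat_eq_mirrorMat]
  obtain ⟨hleft, hright, himage⟩ := stmt6_general (sPartial_lt_sPartial_succ (hx n))
  exact ⟨hleft, hright, fun z him hnorm ↦
    mem_halfCircle_neg_iff.1 (himage ▸ Set.mem_image_of_mem _ ⟨him, hnorm⟩)⟩
end

section
/- Let x : ℕ → ℝ be a sequence of positive real numbers, let s_n = x_0 + ⋯ + x_n with s_{−1} = 0, let g_n ∈ SL(2,ℝ) be the matrix [[(s_{n−1}+s_n)/(s_n−s_{n−1}), −2·s_{n−1}·s_n/(s_n−s_{n−1})], [−2/(s_n−s_{n−1}), (s_{n−1}+s_n)/(s_n−s_{n−1})]], and let Γ_x be the subgroup of SL(2,ℝ) generated by {g_n : n ∈ ℕ}. Then Γ_x is a discrete subgroup of SL(2,ℝ): the subspace topology induced on Γ_x from SL(2,ℝ) is the discrete topology. -/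
/-- `SL(2,ℝ)` topologized as a subspace of the 2×2 real matrices. -/
noncomputable instance : TopologicalSpace (Matrix.SpecialLinearGroup (Fin 2) ℝ) :=
  TopologicalSpace.induced
    (fun g => (g : Matrix (Fin 2) (Fin 2) ℝ)) inferInstance

/-!
The matrix `g_n` acts on `ℍ` as inversion in the geodesic with endpoints `s_{n-1}, s_n` followed by
reflection in the imaginary axis. Hence `g_n` maps the complement of the half-disc under this
geodesic into the half-disc under its mirror image, and `g_n⁻¹` does the reverse. All these
half-discs are pairwise disjoint, as distinct ones touch at most on the real line, and the
imaginary axis avoids them. Playing ping-pong with the base point `i`, every nontrivial element of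
the group moves `i` into one of the half-discs. Near `0` the only ideal endpoints of these
geodesics are `0` and `± s_0`, so a neighbourhood of `i` misses all the half-discs, and only the
identity keeps `i` in that neighbourhood.
-/

open Set Topology UpperHalfPlane
open scoped Function MatrixGroups

theorem discreteTopology_of_forall_smul_mem_nhds {G α : Type*} [Group G] [TopologicalSpace G]
    [SeparatelyContinuousMul G] [TopologicalSpace α] [MulAction G α] [ContinuousSMul G α]
    {p : α} {U : Set α} (hU : U ∈ 𝓝 p) (h : ∀ g : G, g • p ∈ U → g = 1) :
    DiscreteTopology G := by
  have hcont : Continuous fun g : G ↦ g • p := by fun_prop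
  have hpre : (fun g : G ↦ g • p) ⁻¹' U ∈ 𝓝 1 :=
    hcont.continuousAt.preimage_mem_nhds (by rwa [one_smul])
  refine discreteTopology_of_isOpen_singleton_one (isOpen_iff_mem_nhds.2 ?_)
  rintro _ rfl
  exact Filter.mem_of_superset hpre h

section PingPong

variable {ι G α : Type*} [Group G] [MulAction G α] {a : ι → G} {X : ι × Bool → Set α}

theorem cond_inv_smul_mem (ha : ∀ i, ∀ z ∉ X (i, false), a i • z ∈ X (i, true)) :
    ∀ (l : ι × Bool) {z : α}, z ∉ X (l.1, !l.2) → cond l.2 (a l.1) (a l.1)⁻¹ • z ∈ X l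
  | (i, true), _, hz => ha i _ hz
  | (i, false), z, hz => by
    by_contra h
    exact hz (smul_inv_smul (a i) z ▸ ha i _ h)

theorem prod_map_smul_mem_of_isReduced (hX : Pairwise (Disjoint on X))
    (ha : ∀ i, ∀ z ∉ X (i, false), a i • z ∈ X (i, true)) {p : α} (hp : ∀ l, p ∉ X l)
    (l : ι × Bool) (L : List (ι × Bool)) (hL : FreeGroup.IsReduced (l :: L)) :
    ((l :: L).map fun x ↦ cond x.2 (a x.1) (a x.1)⁻¹).prod • p ∈ X l := by
  rw [List.map_cons, List.prod_cons, mul_smul]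
  refine cond_inv_smul_mem ha l ?_
  cases L with
  | nil => simpa using hp (l.1, !l.2)
  | cons m L =>
    rw [FreeGroup.isReduced_cons_cons] at hL
    have hm : m ≠ (l.1, !l.2) := by
      rintro rfl
      simp at hL
    exact disjoint_left.1 (hX hm) (prod_map_smul_mem_of_isReduced hX ha hp m L hL.2)

theorem exists_smul_mem_of_mem_closure_range (hX : Pairwise (Disjoint on X))
    (ha : ∀ i, ∀ z ∉ X (i, false), a i • z ∈ X (i, true)) {p : α} (hp : ∀ l, p ∉ X l)
    {g : G} (hg : g ∈ Subgroup.closure (range a)) (hg1 : g ≠ 1) : ∃ l, g • p ∈ X l := by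
  classical
  rw [← FreeGroup.range_lift_eq_closure] at hg
  obtain ⟨w, rfl⟩ := hg
  rw [← FreeGroup.mk_toWord (x := w), FreeGroup.lift_mk] at hg1 ⊢
  cases hw : w.toWord with
  | nil => simp [hw] at hg1
  | cons l L =>
    exact ⟨l, prod_map_smul_mem_of_isReduced hX ha hp l L (hw ▸ FreeGroup.isReduced_toWord)⟩

end PingPong

section HalfDisc

variable {p q : ℝ} {z : ℍ}

/-- The closed half-disc in `ℍ` bounded by the geodesic with ideal endpoints `p ≤ q`; these are
the ping-pong domains. The points `p` and `q` do not belong to it. -/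
def halfDisc (p q : ℝ) : Set ℍ :=
  {z | ‖(z : ℂ) - ((p + q) / 2 : ℝ)‖ ≤ (q - p) / 2}

theorem isClosed_halfDisc (p q : ℝ) : IsClosed (halfDisc p q) :=
  isClosed_le ((continuous_coe.sub continuous_const).norm) continuous_const

theorem re_mem_Ioo_of_mem_halfDisc (hz : z ∈ halfDisc p q) : z.re ∈ Ioo p q := by
  have hre : |z.re - (p + q) / 2| < ‖(z : ℂ) - ((p + q) / 2 : ℝ)‖ := by
    simpa using Complex.abs_re_lt_norm.2
      (show ((z : ℂ) - ((p + q) / 2 : ℝ)).im ≠ 0 by simpa using z.im_ne_zero)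
  have := abs_lt.1 (hre.trans_le hz)
  constructor <;> linarith

/-- Inversion in the geodesic with ideal endpoints `p`, `q`, followed by reflection in the
imaginary axis, as an element of `SL(2, ℝ)`. -/
noncomputable def halfDiscPairing (h : p ≠ q) : SL(2, ℝ) :=
  ⟨!![(p + q) / (q - p), -2 * p * q / (q - p); -2 / (q - p), (p + q) / (q - p)], by
    have : q - p ≠ 0 := sub_ne_zero.2 h.symm
    rw [Matrix.det_fin_two_of]
    field_simp
    ring⟩

theorem coe_halfDiscPairing_smul (h : p ≠ q) (z : ℍ) :
    ((halfDiscPairing h • z : ℍ) : ℂ) =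
      ((-q + -p) / 2 : ℝ) - (((q - p) / 2 : ℝ) : ℂ) ^ 2 / (z - ((p + q) / 2 : ℝ)) := by
  have hpq : (q : ℂ) - p ≠ 0 := sub_ne_zero.2 (mod_cast h.symm)
  have hcenter : (z : ℂ) - ((p + q) / 2 : ℝ) ≠ 0 := sub_ne_zero.2 (z.ne_ofReal _)
  calc ((halfDiscPairing h • z : ℍ) : ℂ)
      = ((p + q) / (q - p) * z + -2 * p * q / (q - p)) /
          (-2 / (q - p) * z + (p + q) / (q - p)) := by
        rw [coe_specialLinearGroup_apply]
        simp [halfDiscPairing]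
    _ = ((p + q) / 2 * z - p * q) / -(z - ((p + q) / 2 : ℝ)) := by
        refine Eq.trans ?_ (mul_div_mul_left _ _ (div_ne_zero two_ne_zero hpq))
        push_cast
        congr 1 <;> ring
    _ = ((-q + -p) / 2 : ℝ) - (((q - p) / 2 : ℝ) : ℂ) ^ 2 / (z - ((p + q) / 2 : ℝ)) := by
        rw [div_neg, ← neg_div, eq_sub_iff_add_eq, ← add_div, div_eq_iff hcenter]
        push_cast
        ring

theorem norm_halfDiscPairing_smul_sub (h : p ≠ q) (z : ℍ) :
    ‖((halfDiscPairing h • z : ℍ) : ℂ) - ((-q + -p) / 2 : ℝ)‖ =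
      ((q - p) / 2) ^ 2 / ‖(z : ℂ) - ((p + q) / 2 : ℝ)‖ := by
  rw [coe_halfDiscPairing_smul, sub_sub_cancel_left, norm_neg, norm_div, norm_pow,
    Complex.norm_real, Real.norm_eq_abs, sq_abs]

theorem halfDiscPairing_smul_mem (h : p < q) (hz : z ∉ halfDisc p q) :
    halfDiscPairing h.ne • z ∈ halfDisc (-q) (-p) := by
  have hr : 0 < (q - p) / 2 := by linarith
  have hz : (q - p) / 2 < ‖(z : ℂ) - ((p + q) / 2 : ℝ)‖ := not_le.1 hz
  calc ‖((halfDiscPairing h.ne • z : ℍ) : ℂ) - ((-q + -p) / 2 : ℝ)‖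
      = ((q - p) / 2) ^ 2 / ‖(z : ℂ) - ((p + q) / 2 : ℝ)‖ := norm_halfDiscPairing_smul_sub ..
    _ ≤ ((q - p) / 2) ^ 2 / ((q - p) / 2) :=
      div_le_div_of_nonneg_left (sq_nonneg _) hr hz.le
    _ = (-p - -q) / 2 := by field_simp; ring

end HalfDisc

-- The topology on `SL(2, ℝ)` declared above is a new instance, only definitionally equal to the
-- library's, so instance search does not find the following two.
instance : IsTopologicalGroup SL(2, ℝ) := Matrix.SpecialLinearGroup.topologicalGroup

instance : ContinuousSMul SL(2, ℝ) ℍ := instContinuousSMulSL2R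

section ChainDisc

variable {s : ℕ → ℝ}

/-- The half-discs over the consecutive intervals `[s n, s (n + 1)]`, indexed by `(n, false)`, and
their mirror images in the imaginary axis, indexed by `(n, true)`. A letter `(n, b)` of a word in
a free group stands for the `n`-th generator if `b` is `true` and for its inverse otherwise, and
the generators here map into the mirror images. -/
def chainDisc (s : ℕ → ℝ) : ℕ × Bool → Set ℍ
  | (n, false) => halfDisc (s n) (s (n + 1))
  | (n, true) => halfDisc (-s (n + 1)) (-s n)

theorem isClosed_chainDisc (s : ℕ → ℝ) : ∀ l, IsClosed (chainDisc s l)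
  | (_, false) => isClosed_halfDisc ..
  | (_, true) => isClosed_halfDisc ..

theorem cond_neg_re_mem_Ioo_of_mem_chainDisc {z : ℍ} :
    ∀ {l : ℕ × Bool}, z ∈ chainDisc s l → cond l.2 (-z.re) z.re ∈ Ioo (s l.1) (s (l.1 + 1))
  | (_, false), hz => re_mem_Ioo_of_mem_halfDisc hz
  | (_, true), hz =>
    have hre := re_mem_Ioo_of_mem_halfDisc hz
    ⟨lt_neg_of_lt_neg hre.2, neg_lt_of_neg_lt hre.1⟩

theorem pairwise_disjoint_chainDisc (hs : Monotone s) (h0 : 0 ≤ s 0) :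
    Pairwise (Disjoint on chainDisc s) := by
  rintro ⟨m, b⟩ ⟨n, c⟩ hne
  refine disjoint_left.2 fun z hm hn ↦ ?_
  replace hm := cond_neg_re_mem_Ioo_of_mem_chainDisc hm
  replace hn := cond_neg_re_mem_Ioo_of_mem_chainDisc hn
  obtain rfl | hbc := eq_or_ne b c
  · have hmn : m ≠ n := fun h ↦ hne (h ▸ rfl)
    exact disjoint_left.1 (hs.pairwise_disjoint_on_Ioo_succ hmn) hm hn
  · have hm0 := (h0.trans (hs m.zero_le)).trans_lt hm.1
    have hn0 := (h0.trans (hs n.zero_le)).trans_lt hn.1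
    have hneg : cond b (-z.re) z.re = -cond c (-z.re) z.re := by
      cases b <;> cases c <;> simp at hbc ⊢
    linarith

theorem lt_abs_re_of_mem_chainDisc {z : ℍ} {l : ℕ × Bool} (hz : z ∈ chainDisc s l) :
    s l.1 < |z.re| :=
  (cond_neg_re_mem_Ioo_of_mem_chainDisc hz).1.trans_le <| by
    cases l.2
    exacts [le_abs_self _, neg_le_abs _]

theorem notMem_chainDisc_of_re_eq_zero (hs : Monotone s) (h0 : 0 ≤ s 0) {z : ℍ} (hz : z.re = 0)
    (l : ℕ × Bool) : z ∉ chainDisc s l := fun hl ↦ by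
  have := lt_abs_re_of_mem_chainDisc hl
  rw [hz, abs_zero] at this
  exact (h0.trans (hs l.1.zero_le)).not_gt this

theorem compl_iUnion_chainDisc_mem_nhds (hs : Monotone s) (h0 : 0 ≤ s 0) (h1 : 0 < s 1) {z : ℍ}
    (hz : z.re = 0) : (⋃ l, chainDisc s l)ᶜ ∈ 𝓝 z := by
  have hfirst (b : Bool) : ∀ᶠ w in 𝓝 z, w ∉ chainDisc s (0, b) :=
    (isClosed_chainDisc s _).isOpen_compl.mem_nhds
      (notMem_chainDisc_of_re_eq_zero hs h0 hz _)
  have hre : ∀ᶠ w : ℍ in 𝓝 z, |w.re| < s 1 :=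
    continuous_re.abs.continuousAt.eventually_lt_const (by simpa [hz])
  filter_upwards [hfirst false, hfirst true, hre] with w hwf hwt hw
  simp only [mem_compl_iff, mem_iUnion, not_exists]
  rintro ⟨_ | n, b⟩ hl
  · cases b
    exacts [hwf hl, hwt hl]
  · exact ((hs n.succ_pos).trans_lt (lt_abs_re_of_mem_chainDisc hl)).not_gt hw

/-- The generator that maps the complement of `chainDisc s (n, false)` into
`chainDisc s (n, true)`. -/
noncomputable def chainPairing (hs : StrictMono s) (n : ℕ) : SL(2, ℝ) :=
  halfDiscPairing (hs n.lt_succ_self).ne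

theorem exists_smul_mem_chainDisc (hs : StrictMono s) (h0 : 0 ≤ s 0) {g : SL(2, ℝ)}
    (hg : g ∈ Subgroup.closure (range (chainPairing hs)))
    (hg1 : g ≠ 1) {z : ℍ} (hz : z.re = 0) : ∃ l, g • z ∈ chainDisc s l :=
  exists_smul_mem_of_mem_closure_range (pairwise_disjoint_chainDisc hs.monotone h0)
    (fun n _ ↦ halfDiscPairing_smul_mem (hs n.lt_succ_self))
    (notMem_chainDisc_of_re_eq_zero hs.monotone h0 hz) hg hg1

end ChainDisc

theorem stmt7_general {s : ℕ → ℝ} (hs : StrictMono s) (h0 : 0 ≤ s 0) :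
    DiscreteTopology (Subgroup.closure (range (chainPairing hs))) := by
  have hU := compl_iUnion_chainDisc_mem_nhds hs.monotone h0 (h0.trans_lt (hs one_pos)) I_re
  refine discreteTopology_of_forall_smul_mem_nhds hU fun ⟨g, hg⟩ hgU ↦ ?_
  by_contra hg1
  exact hgU (mem_iUnion.2 (exists_smul_mem_chainDisc hs h0 hg (mt (Subtype.ext ·) hg1) I_re))

theorem strictMono_sPartial {x : ℕ → ℝ} (hx : ∀ n, 0 < x n) : StrictMono (sPartial x) :=
  strictMono_nat_of_lt_succ fun n ↦ by
    simpa only [sPartial, Finset.sum_range_succ] using lt_add_of_pos_right _ (hx n)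

theorem setOf_exists_coe_eq_gMat {x : ℕ → ℝ} (hs : StrictMono (sPartial x)) :
    {g : SL(2, ℝ) | ∃ n, (g : Matrix (Fin 2) (Fin 2) ℝ) = gMat x n} =
      range (chainPairing hs) := by
  ext g
  exact exists_congr fun n ↦ ⟨fun h ↦ Subtype.ext h.symm, fun h ↦ h ▸ rfl⟩

/-- the subgroup `Γ_x` of `SL(2,ℝ)` generated by the `g_n` is
discrete: the subspace topology induced on `Γ_x` from `SL(2,ℝ)` is the discrete
topology. -/
theorem stmt7 (x : ℕ → ℝ) (hx : ∀ n, 0 < x n)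
    (Γ : Subgroup (Matrix.SpecialLinearGroup (Fin 2) ℝ))
    (hΓ : Γ = Subgroup.closure
      {g : Matrix.SpecialLinearGroup (Fin 2) ℝ |
        ∃ n : ℕ, (g : Matrix (Fin 2) (Fin 2) ℝ) = gMat x n}) :
    DiscreteTopology ↥Γ := by
  rw [hΓ, setOf_exists_coe_eq_gMat (strictMono_sPartial hx)]
  exact stmt7_general (strictMono_sPartial hx) (Finset.sum_range_zero x).ge
end

section
/- Let x : ℕ → ℝ be a sequence of positive real numbers, let s_n = x_0 + ⋯ + x_n with s_{−1} = 0, let g_n ∈ SL(2,ℝ) be the matrix [[(s_{n−1}+s_n)/(s_n−s_{n−1}), −2·s_{n−1}·s_n/(s_n−s_{n−1})], [−2/(s_n−s_{n−1}), (s_{n−1}+s_n)/(s_n−s_{n−1})]], and let Γ_x be the subgroup of SL(2,ℝ) generated by {g_n : n ∈ ℕ}. Then the action of Γ_x on the upper half-plane ℍ is free modulo center: if γ ∈ Γ_x and z ∈ ℍ satisfy γ·z = z, then γ = I or γ = −I. In particular Γ_x is torsion-free as a subgroup of PSL(2,ℝ). -/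
/-!
The generator `g_n` is, up to sign, the product of the reflections of `ℍ` in the geodesics with
endpoints `0, ∞` and `s_{n-1}, s_n`. These geodesics cut off arcs of the boundary circle with
disjoint interiors, and each reflection maps the complement of its own arc into that arc. By
ping-pong, a cyclically reduced word in the reflections maps the arc of its first letter into
itself, which is impossible for a rotation. Every word is conjugate to a cyclically reduced one or
to one of length at most one, so `Γ_x` contains no elliptic element, whereas a matrix in
`SL(2, ℝ)` that fixes a point of `ℍ` is elliptic or central.
-/

open Matrix Set

theorem word_induction {ι : Type*} {P : List ι → Prop} (nil : P []) (singleton : ∀ i, P [i])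
    (cancel : ∀ l₁ i l₂, P (l₁ ++ l₂) → P (l₁ ++ i :: i :: l₂))
    (conj : ∀ i l, P l → P (i :: (l ++ [i])))
    (cyclicallyReduced : ∀ i l, (i :: (l ++ [i])).IsChain (· ≠ ·) → P (i :: l)) (l : List ι) :
    P l := by
  induction hn : l.length using Nat.strong_induction_on generalizing l with
  | _ n ih =>
  subst hn
  obtain _ | ⟨i, t⟩ := l
  · exact nil
  by_cases hred : (i :: (t ++ [i])).IsChain (· ≠ ·)
  · exact cyclicallyReduced i t hred
  rw [List.isChain_iff_forall_rel_of_append_cons_cons] at hred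
  push Not at hred
  obtain ⟨j, _, l₁, l₂, hsplit, rfl⟩ := hred
  rw [← List.cons_append] at hsplit
  obtain rfl | ⟨l₂, k, rfl⟩ := l₂.eq_nil_or_concat'
  · obtain ⟨hl, rfl⟩ : i :: t = l₁ ++ [j] ∧ i = j := by
      simpa using List.append_inj' (hsplit.trans (List.append_cons l₁ j [j])) rfl
    obtain _ | ⟨k, s⟩ := l₁
    · rw [hl]
      exact singleton i
    · obtain ⟨rfl, rfl⟩ : i = k ∧ t = s ++ [i] := by simpa using hl
      exact conj i s (ih _ (by simp) s rfl)
  · have hl : i :: t = l₁ ++ j :: j :: l₂ :=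
      (List.append_inj' (hsplit.trans (by simp : _ = (l₁ ++ j :: j :: l₂) ++ [k])) rfl).1
    rw [hl]
    exact cancel l₁ j l₂ (ih _ (by simp [hl]) _ rfl)

theorem mapsTo_word_mulVec {ι n R : Type*} [Fintype n] [DecidableEq n] [Semiring R]
    {σ : ι → Matrix n n R} {A : ι → Set (n → R)}
    (hA : Pairwise fun i j ↦ MapsTo (σ i *ᵥ ·) (A j) (A i)) {i k : ι} {l : List ι}
    (hl : (i :: (l ++ [k])).IsChain (· ≠ ·)) :
    MapsTo (((i :: l).map σ).prod *ᵥ ·) (A k) (A i) := by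
  induction l generalizing i with
  | nil =>
    have hik : i ≠ k := by simpa using hl
    simpa using hA hik
  | cons j l ih =>
    obtain ⟨hij, hl⟩ := List.isChain_cons_cons.1 hl
    intro w hw
    simpa [mulVec_mulVec] using hA hij (ih hl hw)

theorem discr_mul_comm {n R : Type*} [Fintype n] [DecidableEq n] [CommRing R]
    (A B : Matrix n n R) : (A * B).discr = (B * A).discr := by
  rw [discr, discr, charpoly_mul_comm]

section CommRing

variable {R : Type*} [CommRing R] {M : Matrix (Fin 2) (Fin 2) R}

/-- A matrix of trace `0` and determinant `-1`: for `R = ℝ`, the linear representatives of the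
reflections of `ℍ` in geodesics. -/
structure IsReflection (M : Matrix (Fin 2) (Fin 2) R) : Prop where
  trace_eq_zero : M.trace = 0
  det_eq_neg_one : M.det = -1

theorem IsReflection.adjugate_eq_neg (hM : IsReflection M) : M.adjugate = -M := by
  have htr := hM.trace_eq_zero
  rw [trace_fin_two] at htr
  rw [adjugate_fin_two]
  ext i j
  fin_cases i <;> fin_cases j <;> simp <;> linear_combination htr

theorem IsReflection.mul_self (hM : IsReflection M) : M * M = 1 := by
  simpa [hM.adjugate_eq_neg, hM.det_eq_neg_one] using M.mul_adjugate

/-- The quadratic form `w ↦ det (w | M w)` on the plane, which vanishes exactly on the eigenvectors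
of `M`. When `M` is a reflection of `ℍ` in a geodesic, the inequality `0 ≤ eigenvectorForm M w`
describes one of the two arcs of the boundary circle `ℙ¹(ℝ)` between the endpoints of that geodesic,
and replacing `M` by `-M` exchanges the two arcs. -/
def eigenvectorForm (M : Matrix (Fin 2) (Fin 2) R) (w : Fin 2 → R) : R :=
  w 0 * (M *ᵥ w) 1 - w 1 * (M *ᵥ w) 0

theorem eigenvectorForm_mulVec_of_mul_eq {P N : Matrix (Fin 2) (Fin 2) R} (h : M * P = P * N)
    (w : Fin 2 → R) : eigenvectorForm M (P *ᵥ w) = P.det * eigenvectorForm N w := by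
  rw [eigenvectorForm, mulVec_mulVec, h, ← mulVec_mulVec, eigenvectorForm]
  generalize N *ᵥ w = v
  simp only [mulVec, dotProduct, Fin.sum_univ_two, det_fin_two]
  ring

theorem IsReflection.eigenvectorForm_mulVec (hM : IsReflection M) (w : Fin 2 → R) :
    eigenvectorForm M (M *ᵥ w) = -eigenvectorForm M w := by
  rw [eigenvectorForm_mulVec_of_mul_eq rfl, hM.det_eq_neg_one, neg_one_mul]

theorem isReflection_diagonal : IsReflection (!![1, 0; 0, -1] : Matrix (Fin 2) (Fin 2) R) :=
  ⟨by simp [trace_fin_two], by simp [det_fin_two]⟩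

theorem eigenvectorForm_diagonal (w : Fin 2 → R) :
    eigenvectorForm !![1, 0; 0, -1] w = -2 * (w 0 * w 1) := by
  simp only [eigenvectorForm, mulVec, dotProduct, Fin.sum_univ_two, of_apply, cons_val_zero,
    cons_val_one]
  ring

theorem exists_word_of_mem_closure {ι : Type*} {σ : ι → Matrix (Fin 2) (Fin 2) R}
    (hσ : ∀ i, IsReflection (σ i)) {S : Set (Matrix.SpecialLinearGroup (Fin 2) R)}
    (hS : ∀ g ∈ S, ∃ i j, (g : Matrix (Fin 2) (Fin 2) R) = -(σ i * σ j))
    {γ : Matrix.SpecialLinearGroup (Fin 2) R} (hγ : γ ∈ Subgroup.closure S) :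
    ∃ l : List ι, (γ : Matrix (Fin 2) (Fin 2) R) = (l.map σ).prod ∨
      (γ : Matrix (Fin 2) (Fin 2) R) = -(l.map σ).prod := by
  induction hγ using Subgroup.closure_induction'' with
  | mem g hg =>
    obtain ⟨i, j, hij⟩ := hS g hg
    exact ⟨[i, j], .inr (by simpa using hij)⟩
  | inv_mem g hg =>
    obtain ⟨i, j, hij⟩ := hS g hg
    refine ⟨[j, i], .inr ?_⟩
    rw [Matrix.SpecialLinearGroup.coe_inv, hij, ← neg_one_smul R, adjugate_smul,
      adjugate_mul_distrib, (hσ i).adjugate_eq_neg, (hσ j).adjugate_eq_neg]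
    simp
  | one => exact ⟨[], .inl (by simp)⟩
  | mul a b _ _ ha hb =>
    obtain ⟨l, hl⟩ := ha
    obtain ⟨m, hm⟩ := hb
    refine ⟨l ++ m, ?_⟩
    obtain hl | hl := hl <;> obtain hm | hm := hm <;> simp [hl, hm]

end CommRing

section Field

variable {K : Type*} [Field K]

theorem IsReflection.exists_mul_eq_mul_diagonal [NeZero (2 : K)]
    {M : Matrix (Fin 2) (Fin 2) K} (hM : IsReflection M) :
    ∃ P : Matrix (Fin 2) (Fin 2) K, P.det = 1 ∧ M * P = P * !![1, 0; 0, -1] := by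
  obtain ⟨a, b, c, d, rfl⟩ : ∃ a b c d, M = !![a, b; c, d] := ⟨_, _, _, _, M.eta_fin_two⟩
  obtain rfl : d = -a := by
    have := hM.trace_eq_zero
    rw [trace_fin_two_of] at this
    linear_combination this
  have hdet : a ^ 2 + b * c = 1 := by
    have := hM.det_eq_neg_one
    rw [det_fin_two_of] at this
    linear_combination -this
  obtain rfl | hc := eq_or_ne c 0
  · have hhalf : -(b / 2) + b = b / 2 := by
      linear_combination -add_halves b
    obtain rfl | rfl : a = 1 ∨ a = -1 := by simpa using hdet
    · exact ⟨!![1, -(b / 2); 0, 1], by simp, by simp [hhalf]⟩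
    · exact ⟨!![b / 2, -1; 1, 0], by simp, by simp [hhalf]⟩
  · obtain rfl : b = (1 - a ^ 2) / c := by
      field_simp
      linear_combination hdet
    refine ⟨!![1 + a, (a - 1) / (2 * c); c, 1 / 2], ?_, ?_⟩
    · rw [det_fin_two_of]
      field_simp
      ring
    · ext i j
      fin_cases i <;> fin_cases j <;> simp <;> field_simp <;> ring

/-- The reflection of `ℍ` in the geodesic with endpoints `a ≠ b`, represented by the matrix
of determinant `-1` whose `eigenvectorForm` is nonnegative over the interval `[a, b]` if
`a < b`. -/
def geodesicReflection (a b : K) : Matrix (Fin 2) (Fin 2) K :=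
  !![-(a + b) / (b - a), 2 * a * b / (b - a); -2 / (b - a), (a + b) / (b - a)]

theorem isReflection_geodesicReflection {a b : K} (hab : a ≠ b) :
    IsReflection (geodesicReflection a b) := by
  have hba : b - a ≠ 0 := sub_ne_zero.2 hab.symm
  constructor
  · rw [geodesicReflection, trace_fin_two_of]
    ring
  · rw [geodesicReflection, det_fin_two_of]
    field_simp
    ring

theorem eigenvectorForm_geodesicReflection (a b : K) (w : Fin 2 → K) :
    eigenvectorForm (geodesicReflection a b) w =
      -2 * ((w 0 - a * w 1) * (w 0 - b * w 1)) / (b - a) := by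
  simp only [eigenvectorForm, geodesicReflection, mulVec, dotProduct, Fin.sum_univ_two, of_apply,
    cons_val_zero, cons_val_one]
  ring

end Field

section OrderedField

variable {K : Type*} [Field K] [LinearOrder K] [IsStrictOrderedRing K]
  {M W : Matrix (Fin 2) (Fin 2) K}

theorem not_isElliptic_of_forall_mul_nonpos
    (hW : ∀ w : Fin 2 → K, w 0 * w 1 ≤ 0 → (W *ᵥ w) 0 * (W *ᵥ w) 1 ≤ 0) :
    ¬ W.IsElliptic := by
  obtain ⟨a, b, c, d, rfl⟩ : ∃ a b c d, W = !![a, b; c, d] := ⟨_, _, _, _, W.eta_fin_two⟩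
  intro hell
  rw [IsElliptic, discr_fin_two, trace_fin_two_of, det_fin_two_of] at hell
  have hac : a * c ≤ 0 := by simpa [mulVec, dotProduct] using hW ![1, 0] (by simp)
  have hbd : b * d ≤ 0 := by simpa [mulVec, dotProduct] using hW ![0, 1] (by simp)
  have hdet : 0 < a * d - b * c := by nlinarith [sq_nonneg (a + d)]
  have hbc : b * c < 0 := by nlinarith [sq_nonneg (a - d)]
  have had : 0 ≤ (a * d) * (b * c) := by nlinarith [mul_nonneg_of_nonpos_of_nonpos hac hbd]
  -- `(d - b, a - c)` is `det W` times the preimage of `(1, 1)`.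
  have hpre : 0 < (d - b) * (a - c) := by
    by_contra! hle
    have := hW ![d - b, a - c] hle
    simp only [mulVec, dotProduct, Fin.sum_univ_two, of_apply, cons_val_zero, cons_val_one] at this
    nlinarith [mul_pos hdet hdet]
  have hexpand : -(b * c) * ((d - b) * (a - c)) =
      -((a * d) * (b * c)) + b ^ 2 * (a * c) + c ^ 2 * (b * d) - (b * c) ^ 2 := by ring
  refine (mul_pos (neg_pos.2 hbc) hpre).not_ge ?_
  rw [hexpand]
  linarith [mul_nonpos_of_nonneg_of_nonpos (sq_nonneg b) hac,
    mul_nonpos_of_nonneg_of_nonpos (sq_nonneg c) hbd, sq_nonneg (b * c)]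

theorem IsReflection.not_isElliptic_of_mapsTo (hM : IsReflection M)
    (hW : MapsTo (W *ᵥ ·) {w | 0 ≤ eigenvectorForm M w} {w | 0 ≤ eigenvectorForm M w}) :
    ¬ W.IsElliptic := by
  obtain ⟨P, hdet, hP⟩ := hM.exists_mul_eq_mul_diagonal
  have hform (w : Fin 2 → K) : eigenvectorForm M (P *ᵥ w) = -2 * (w 0 * w 1) := by
    rw [eigenvectorForm_mulVec_of_mul_eq hP, hdet, one_mul, eigenvectorForm_diagonal]
  have hPinv : P * P⁻¹ = 1 := P.mul_nonsing_inv (by simp [hdet])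
  have hconj : (P⁻¹ * (W * P)).discr = W.discr := by
    rw [discr_mul_comm, mul_assoc, hPinv, mul_one]
  rw [IsElliptic, ← hconj]
  refine not_isElliptic_of_forall_mul_nonpos fun w hw ↦ ?_
  have hPw : 0 ≤ eigenvectorForm M (P *ᵥ w) := by
    rw [hform]
    linarith
  have hWPw : W *ᵥ (P *ᵥ w) = P *ᵥ ((P⁻¹ * (W * P)) *ᵥ w) := by
    rw [mulVec_mulVec, mulVec_mulVec, ← mul_assoc, hPinv, one_mul]
  have himage : 0 ≤ eigenvectorForm M (W *ᵥ (P *ᵥ w)) := hW hPw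
  rw [hWPw, hform] at himage
  linarith

theorem not_isElliptic_word {ι : Type*} {σ : ι → Matrix (Fin 2) (Fin 2) K}
    (hσ : ∀ i, IsReflection (σ i))
    (hdisj : Pairwise fun i j ↦ ∀ w, eigenvectorForm (σ i) w + eigenvectorForm (σ j) w ≤ 0)
    (l : List ι) : ¬ (l.map σ).prod.IsElliptic := by
  have hpingpong : Pairwise fun i j ↦ MapsTo (σ i *ᵥ ·)
      {w | 0 ≤ eigenvectorForm (σ j) w} {w | 0 ≤ eigenvectorForm (σ i) w} := by
    intro i j hij w (hw : 0 ≤ eigenvectorForm (σ j) w)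
    change 0 ≤ eigenvectorForm (σ i) (σ i *ᵥ w)
    rw [(hσ i).eigenvectorForm_mulVec]
    linarith [hdisj hij w]
  induction l using word_induction with
  | nil => norm_num [IsElliptic, discr_fin_two]
  | singleton i =>
    simp [IsElliptic, discr_fin_two, (hσ i).trace_eq_zero, (hσ i).det_eq_neg_one]
  | cancel l₁ i l₂ ih =>
    have hcancel : ((l₁ ++ i :: i :: l₂).map σ).prod = ((l₁ ++ l₂).map σ).prod := by
      simp [← mul_assoc (σ i), (hσ i).mul_self]
    rwa [hcancel]
  | conj i l ih =>
    have hconj : ((i :: (l ++ [i])).map σ).prod.discr = (l.map σ).prod.discr := by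
      simp [discr_mul_comm (σ i), mul_assoc, (hσ i).mul_self]
    rwa [IsElliptic, hconj]
  | cyclicallyReduced i l hl =>
    exact (hσ i).not_isElliptic_of_mapsTo (mapsTo_word_mulVec hpingpong hl)

theorem eigenvectorForm_diagonal_add_geodesicReflection_nonpos {a b : K} (ha : 0 ≤ a)
    (hab : a < b) (w : Fin 2 → K) :
    eigenvectorForm !![1, 0; 0, -1] w + eigenvectorForm (geodesicReflection a b) w ≤ 0 := by
  have hL : b - a ≠ 0 := sub_ne_zero.2 hab.ne'
  have hsum : eigenvectorForm !![1, 0; 0, -1] w + eigenvectorForm (geodesicReflection a b) w =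
      -(2 * ((w 0 - a * w 1) ^ 2 + a * (b - a) * w 1 ^ 2) / (b - a)) := by
    rw [eigenvectorForm_diagonal, eigenvectorForm_geodesicReflection]
    field_simp
    ring
  rw [hsum, neg_nonpos]
  positivity [sub_pos.2 hab]

theorem eigenvectorForm_geodesicReflection_add_nonpos {a b c d : K} (hab : a < b) (hbc : b ≤ c)
    (hcd : c < d) (w : Fin 2 → K) :
    eigenvectorForm (geodesicReflection a b) w + eigenvectorForm (geodesicReflection c d) w ≤
      0 := by
  have hL : 0 < b - a := sub_pos.2 hab
  have hM : 0 < d - c := sub_pos.2 hcd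
  have hsum :
      eigenvectorForm (geodesicReflection a b) w + eigenvectorForm (geodesicReflection c d) w =
      -(2 * ((((d - c) + (b - a)) * w 0 -
          ((d - c) * (a + b) + (b - a) * (c + d)) / 2 * w 1) ^ 2 +
        (b - a) * (d - c) * (c - b) * (d - a) * w 1 ^ 2) /
          (((d - c) + (b - a)) * (b - a) * (d - c))) := by
    have hS : (d - c) + (b - a) ≠ 0 := (add_pos hM hL).ne'
    rw [eigenvectorForm_geodesicReflection, eigenvectorForm_geodesicReflection]
    field_simp
    ring
  rw [hsum, neg_nonpos]
  positivity [sub_nonneg.2 hbc, sub_pos.2 (hab.trans (hbc.trans_lt hcd))]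

end OrderedField

section PartialSums

variable {x : ℕ → ℝ}

theorem sPartial_strictMono (hx : ∀ n, 0 < x n) : StrictMono (sPartial x) :=
  strictMono_nat_of_lt_succ fun n ↦ by simp [sPartial, Finset.sum_range_succ, hx n]

theorem sPartial_nonneg (hx : ∀ n, 0 ≤ x n) (n : ℕ) : 0 ≤ sPartial x n :=
  Finset.sum_nonneg fun i _ ↦ hx i

/-- The reflections in the geodesics with endpoints `0, ∞` (index `0`) and `s_{n-1}, s_n`
(index `n + 1`). These geodesics are sides of an ideal polygon with vertices
`∞, 0 = s_{-1}, s_0, s_1, …`. -/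
noncomputable def sideReflection (x : ℕ → ℝ) : ℕ → Matrix (Fin 2) (Fin 2) ℝ
  | 0 => !![1, 0; 0, -1]
  | n + 1 => geodesicReflection (sPartial x n) (sPartial x (n + 1))

theorem isReflection_sideReflection (hx : ∀ n, 0 < x n) :
    ∀ i, IsReflection (sideReflection x i)
  | 0 => isReflection_diagonal
  | n + 1 => isReflection_geodesicReflection (sPartial_strictMono hx n.lt_succ_self).ne

theorem eigenvectorForm_sideReflection_add_nonpos (hx : ∀ n, 0 < x n) :
    Pairwise fun i j ↦ ∀ w,
      eigenvectorForm (sideReflection x i) w + eigenvectorForm (sideReflection x j) w ≤ 0 := by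
  intro i j hij w
  wlog hlt : i < j generalizing i j
  · rw [add_comm]
    exact this hij.symm (hij.lt_or_gt.resolve_left hlt)
  have hmono := sPartial_strictMono hx
  cases i <;> cases j
  case zero.zero => exact absurd rfl hij
  case zero.succ m =>
    exact eigenvectorForm_diagonal_add_geodesicReflection_nonpos
      (sPartial_nonneg (fun n ↦ (hx n).le) m) (hmono m.lt_succ_self) w
  case succ.zero n => exact absurd hlt n.succ.not_lt_zero
  case succ.succ n m =>
    exact eigenvectorForm_geodesicReflection_add_nonpos (hmono n.lt_succ_self)
      (hmono.monotone (Nat.lt_of_succ_lt_succ hlt)) (hmono m.lt_succ_self) w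

theorem gMat_eq_neg_sideReflection_mul (x : ℕ → ℝ) (n : ℕ) :
    gMat x n = -(sideReflection x 0 * sideReflection x (n + 1)) := by
  ext i j
  fin_cases i <;> fin_cases j <;> simp [gMat, sideReflection, geodesicReflection] <;> ring

end PartialSums

theorem eq_one_or_eq_neg_one_of_smul_eq_self {γ : Matrix.SpecialLinearGroup (Fin 2) ℝ}
    (hγ : ¬ (γ : Matrix (Fin 2) (Fin 2) ℝ).IsElliptic) {z : UpperHalfPlane} (hz : γ • z = z) :
    (γ : Matrix (Fin 2) (Fin 2) ℝ) = 1 ∨ (γ : Matrix (Fin 2) (Fin 2) ℝ) = -1 := by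
  have hfix : (γ : GL (Fin 2) ℝ) • z = z := hz
  have hcenter : (γ : GL (Fin 2) ℝ) ∈ Subgroup.center (GL (Fin 2) ℝ) := by
    by_contra hnot
    have hdet : 0 < (γ : GL (Fin 2) ℝ).val.det := by simp
    have hell := UpperHalfPlane.isElliptic_of_exists_smul_eq_self hdet hnot ⟨z, hfix⟩
    exact hγ hell
  rw [GeneralLinearGroup.mem_center_iff_val_mem_range_scalar] at hcenter
  obtain ⟨r, hr : scalar (Fin 2) r = (γ : Matrix (Fin 2) (Fin 2) ℝ)⟩ := hcenter
  have hr2 : r ^ 2 = 1 := by simpa [← hr] using γ.2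
  obtain rfl | rfl := sq_eq_one_iff.1 hr2
  · exact .inl (by rw [← hr, map_one])
  · exact .inr (by rw [← hr, map_neg, map_one])

/-- the action of `Γ_x` on the upper half-plane `ℍ` is free modulo
center: if `γ ∈ Γ_x` fixes a point of `ℍ`, then `γ = I` or `γ = −I`. -/
theorem stmt8 (x : ℕ → ℝ) (hx : ∀ n, 0 < x n)
    (Γ : Subgroup (Matrix.SpecialLinearGroup (Fin 2) ℝ))
    (hΓ : Γ = Subgroup.closure
      {g : Matrix.SpecialLinearGroup (Fin 2) ℝ |
        ∃ n : ℕ, (g : Matrix (Fin 2) (Fin 2) ℝ) = gMat x n}) :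
    ∀ γ : Matrix.SpecialLinearGroup (Fin 2) ℝ, γ ∈ Γ →
      ∀ z : UpperHalfPlane, γ • z = z →
        (γ : Matrix (Fin 2) (Fin 2) ℝ) = 1 ∨ (γ : Matrix (Fin 2) (Fin 2) ℝ) = -1 := by
  subst hΓ
  intro γ hγ z hz
  have hrefl := isReflection_sideReflection hx
  obtain ⟨l, hl⟩ := exists_word_of_mem_closure hrefl (by
    rintro g ⟨n, hn⟩
    exact ⟨0, n + 1, hn.trans (gMat_eq_neg_sideReflection_mul x n)⟩) hγ
  have hword := not_isElliptic_word hrefl (eigenvectorForm_sideReflection_add_nonpos hx) l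
  refine eq_one_or_eq_neg_one_of_smul_eq_self ?_ hz
  obtain hl | hl := hl
  · rwa [hl]
  · rwa [hl, isElliptic_neg_iff]
end

section
/- Let x : ℕ → ℝ be a sequence with x_n ∈ {1, 2} for every n ∈ ℕ, let s_n = x_0 + ⋯ + x_n with s_{−1} = 0, and let g_n be the matrix [[(s_{n−1}+s_n)/(s_n−s_{n−1}), −2·s_{n−1}·s_n/(s_n−s_{n−1})], [−2/(s_n−s_{n−1}), (s_{n−1}+s_n)/(s_n−s_{n−1})]]. Then every entry of every g_n is an integer; hence each g_n lies in SL(2,ℤ) and the subgroup Γ_x of SL(2,ℝ) generated by {g_n : n ∈ ℕ} is contained in SL(2,ℤ). -/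
/-!
Write `s = s_{n-1}` and `k = 2 / x_n`. Since `s_n - s_{n-1} = x_n`, the divisions in `g_n` combine
into `k`, and the entries become the polynomials `k s + 1`, `-(k s² + 2 s)`, `-k`, `k s + 1` in `s`
and `k`, of determinant `1`. They are integers because `s` is a sum of integers and every `x_n`
divides `2`; the same argument works over any ring mapping to `ℝ`. Being a subgroup, the image of
the special linear group then contains the group generated by the `g_n`.
-/

open Matrix

section SidePairing

variable {R S : Type*} [CommRing R] [CommRing S]

/-- The matrix whose Möbius transformation pairs the geodesic from `s` to `t` with its mirror image
from `-s` to `-t`. It is parametrized by `s` and `k = 2 / (t - s)`, so that its entries are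
polynomials and it makes sense over any commutative ring. -/
def sidePairing (s k : R) : SpecialLinearGroup (Fin 2) R :=
  ⟨!![k * s + 1, -(k * s ^ 2 + 2 * s); -k, k * s + 1], by rw [det_fin_two_of]; ring⟩

theorem map_sidePairing (f : R →+* S) (s k : R) :
    SpecialLinearGroup.map f (sidePairing s k) = sidePairing (f s) (f k) := by
  ext i j
  rw [SpecialLinearGroup.map_apply_coe, RingHom.mapMatrix_apply, map_apply]
  fin_cases i <;> fin_cases j <;> simp [sidePairing, map_ofNat f]

end SidePairing

theorem sPartial_succ (x : ℕ → ℝ) (n : ℕ) : sPartial x (n + 1) = sPartial x n + x n :=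
  Finset.sum_range_succ x n

theorem sPartial_mem {σ : Type*} [SetLike σ ℝ] [AddSubmonoidClass σ ℝ] {A : σ} {x : ℕ → ℝ} {n : ℕ}
    (hx : ∀ i < n, x i ∈ A) : sPartial x n ∈ A :=
  sum_mem fun i hi ↦ hx i (Finset.mem_range.mp hi)

theorem gMat_eq_sidePairing {x : ℕ → ℝ} {n : ℕ} (hxn : x n ≠ 0) :
    gMat x n = sidePairing (sPartial x n) (2 / x n) := by
  have sub_eq : sPartial x (n + 1) - sPartial x n = x n := by
    rw [sPartial_succ, add_sub_cancel_left]
  rw [gMat, sub_eq, sPartial_succ]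
  ext i j
  fin_cases i <;> fin_cases j <;> simp [sidePairing] <;> field_simp <;> ring

section RingHom

variable {R : Type*} [CommRing R] (f : R →+* ℝ) {x : ℕ → ℝ}

theorem exists_map_eq_gMat (hx : ∀ n, ∃ d : R, d ∣ 2 ∧ f d = x n) (n : ℕ) :
    ∃ g : SpecialLinearGroup (Fin 2) R,
      (SpecialLinearGroup.map f g : Matrix (Fin 2) (Fin 2) ℝ) = gMat x n := by
  obtain ⟨s, hs⟩ : sPartial x n ∈ f.range := sPartial_mem fun i _ ↦ (hx i).imp fun _ ↦ And.right
  obtain ⟨d, ⟨k, hdk⟩, hd⟩ := hx n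
  have mul_eq_two : x n * f k = 2 := by rw [← hd, ← map_mul, ← hdk, map_ofNat]
  have hxn : x n ≠ 0 := left_ne_zero_of_mul (mul_eq_two ▸ two_ne_zero)
  have hk : f k = 2 / x n := eq_div_of_mul_eq hxn (by rw [mul_comm, mul_eq_two])
  exact ⟨sidePairing s k, by rw [map_sidePairing, hs, hk, gMat_eq_sidePairing hxn]⟩

theorem closure_gMat_le_range_map (hx : ∀ n, ∃ d : R, d ∣ 2 ∧ f d = x n) :
    Subgroup.closure {g : SpecialLinearGroup (Fin 2) ℝ |
        ∃ n : ℕ, (g : Matrix (Fin 2) (Fin 2) ℝ) = gMat x n} ≤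
      (SpecialLinearGroup.map (n := Fin 2) f).range := by
  rw [Subgroup.closure_le]
  rintro g ⟨n, hg⟩
  obtain ⟨δ, hδ⟩ := exists_map_eq_gMat f hx n
  exact ⟨δ, Subtype.ext (hδ.trans hg.symm)⟩

theorem stmt12_general (hx : ∀ n, ∃ d : R, d ∣ 2 ∧ f d = x n) :
    (∀ (n : ℕ) (i j : Fin 2), ∃ m : R, gMat x n i j = f m) ∧
    (∀ n : ℕ, ∃ g : SpecialLinearGroup (Fin 2) R,
      (SpecialLinearGroup.map f g : Matrix (Fin 2) (Fin 2) ℝ) = gMat x n) ∧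
    ∀ γ ∈ Subgroup.closure {g : SpecialLinearGroup (Fin 2) ℝ |
        ∃ n : ℕ, (g : Matrix (Fin 2) (Fin 2) ℝ) = gMat x n},
      ∃ δ : SpecialLinearGroup (Fin 2) R, SpecialLinearGroup.map f δ = γ := by
  refine ⟨fun n i j ↦ ?_, exists_map_eq_gMat f hx, fun _ hγ ↦ closure_gMat_le_range_map f hx hγ⟩
  obtain ⟨g, hg⟩ := exists_map_eq_gMat f hx n
  exact ⟨g i j, by rw [← hg]; rfl⟩

end RingHom

/-- if every `x n` lies in `{1, 2}`, then every entry of every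
`g_n` is an integer; hence each `g_n` lies in SL(2,ℤ) and the subgroup `Γ_x`
generated by the `g_n` is contained in SL(2,ℤ). -/
theorem stmt12 (x : ℕ → ℝ) (hx : ∀ n, x n = 1 ∨ x n = 2) :
    (∀ (n : ℕ) (i j : Fin 2), ∃ m : ℤ, gMat x n i j = (m : ℝ)) ∧
    (∀ n : ℕ, ∃ g : Matrix.SpecialLinearGroup (Fin 2) ℤ,
      ((Matrix.SpecialLinearGroup.map (Int.castRingHom ℝ) g :
        Matrix.SpecialLinearGroup (Fin 2) ℝ) : Matrix (Fin 2) (Fin 2) ℝ) = gMat x n) ∧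
    ∀ γ ∈ Subgroup.closure
        {g : Matrix.SpecialLinearGroup (Fin 2) ℝ |
          ∃ n : ℕ, (g : Matrix (Fin 2) (Fin 2) ℝ) = gMat x n},
      ∃ δ : Matrix.SpecialLinearGroup (Fin 2) ℤ,
        Matrix.SpecialLinearGroup.map (Int.castRingHom ℝ) δ = γ :=
  stmt12_general (Int.castRingHom ℝ) fun n ↦
    (hx n).elim (fun h ↦ ⟨1, one_dvd 2, by simp [h]⟩) (fun h ↦ ⟨2, dvd_rfl, by simp [h]⟩)
end

section
/- Let a, b, c, d, e : ℤ → ℝ satisfy a_n < b_n < c_n < d_n < e_n and e_n ≤ a_{n+1} for all n ∈ ℤ. For reals u < v < w < x define T(u,v,w,x) = (1/√(r·r'))·[[O', −(O·O' + r·r')], [1, −O]] ∈ SL(2,ℝ), where O = (u+v)/2, r = (v−u)/2, O' = (w+x)/2, r' = (x−w)/2, and set f_n = T(a_n, b_n, c_n, d_n) and g_n = T(b_n, c_n, d_n, e_n). Then for every n ∈ ℤ both f_n and g_n are hyperbolic elements of SL(2,ℝ): |tr f_n| > 2 and |tr g_n| > 2. -/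
/-- For reals `u < v < w < x`, the matrix
`T(u,v,w,x) = (1/√(r·r'))·[[O', −(O·O' + r·r')], [1, −O]]`, where `O = (u+v)/2`,
`r = (v−u)/2`, `O' = (w+x)/2`, `r' = (x−w)/2`. -/
noncomputable def TMat (u v w x : ℝ) : Matrix (Fin 2) (Fin 2) ℝ :=
  (1 / Real.sqrt (((v - u) / 2) * ((x - w) / 2))) •
    !![(w + x) / 2,
        -(((u + v) / 2) * ((w + x) / 2) + ((v - u) / 2) * ((x - w) / 2));
        1, -((u + v) / 2)]

theorem det_TMat {u v w x : ℝ} (hr : 0 < (v - u) / 2 * ((x - w) / 2)) :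
    (TMat u v w x).det = 1 := by
  rw [TMat, Matrix.det_smul, Matrix.det_fin_two_of, Fintype.card_fin, div_pow, one_pow,
    Real.sq_sqrt hr.le, one_div_mul_eq_div, div_eq_one_iff_eq hr.ne']
  ring

theorem trace_TMat (u v w x : ℝ) :
    (TMat u v w x).trace =
      ((w + x) / 2 - (u + v) / 2) / √((v - u) / 2 * ((x - w) / 2)) := by
  rw [TMat, Matrix.trace_smul, Matrix.trace_fin_two_of, smul_eq_mul, one_div_mul_eq_div,
    ← sub_eq_add_neg]

theorem two_lt_trace_TMat {u v w x : ℝ} (huv : u < v) (hvw : v < w) (hwx : w < x) :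
    2 < (TMat u v w x).trace := by
  have hr : 0 < (v - u) / 2 := half_pos (sub_pos.mpr huv)
  have hr' : 0 < (x - w) / 2 := half_pos (sub_pos.mpr hwx)
  have hrr' : 0 < (v - u) / 2 * ((x - w) / 2) := mul_pos hr hr'
  rw [trace_TMat, lt_div_iff₀ (Real.sqrt_pos.mpr hrr')]
  -- The half-circles lie outside each other, so their centres are more than `r + r'` apart.
  calc 2 * √((v - u) / 2 * ((x - w) / 2))
      ≤ (v - u) / 2 + (x - w) / 2 :=
        two_mul_le_add_of_sq_le_mul hr.le hr'.le (Real.sq_sqrt hrr'.le).le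
    _ < (w + x) / 2 - (u + v) / 2 := by linarith

theorem stmt13_general {u v w x : ℝ} (huv : u < v) (hvw : v < w) (hwx : w < x) :
    (TMat u v w x).det = 1 ∧ |(TMat u v w x).trace| > 2 :=
  ⟨det_TMat (mul_pos (half_pos (sub_pos.mpr huv)) (half_pos (sub_pos.mpr hwx))),
    lt_abs.mpr (.inl (two_lt_trace_TMat huv hvw hwx))⟩

/-- with `f_n = T(a_n, b_n, c_n, d_n)` and
`g_n = T(b_n, c_n, d_n, e_n)`, every `f_n` and every `g_n` is a hyperbolic
element of SL(2,ℝ): it has determinant 1 and the absolute value of its trace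
is strictly greater than 2. -/
theorem stmt13 (a b c d e : ℤ → ℝ)
    (h : ∀ n : ℤ, a n < b n ∧ b n < c n ∧ c n < d n ∧ d n < e n ∧ e n ≤ a (n + 1)) :
    ∀ n : ℤ,
      ((TMat (a n) (b n) (c n) (d n)).det = 1 ∧
        |(TMat (a n) (b n) (c n) (d n)).trace| > 2) ∧
      ((TMat (b n) (c n) (d n) (e n)).det = 1 ∧
        |(TMat (b n) (c n) (d n) (e n)).trace| > 2) := by
  intro n
  obtain ⟨hab, hbc, hcd, hde, -⟩ := h n
  exact ⟨stmt13_general hab hbc hcd, stmt13_general hbc hcd hde⟩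
end

section
/- Let a, b, c, d, e : ℤ → ℝ satisfy a_n < b_n < c_n < d_n < e_n and e_n ≤ a_{n+1} for all n ∈ ℤ. For reals u < v < w < x define T(u,v,w,x) = (1/√(r·r'))·[[O', −(O·O' + r·r')], [1, −O]] ∈ SL(2,ℝ), where O = (u+v)/2, r = (v−u)/2, O' = (w+x)/2, r' = (x−w)/2, and set f_n = T(a_n, b_n, c_n, d_n), g_n = T(b_n, c_n, d_n, e_n), and let G be the subgroup of SL(2,ℝ) generated by {f_n, g_n : n ∈ ℤ}. Then G acts freely modulo center on the upper half-plane ℍ: if γ ∈ G and z ∈ ℍ satisfy γ·z = z, then γ = I or γ = −I. -/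
/-!
Each `TMat u v w x` maps the exterior of `(u, v)` into `[w, x]`, and its inverse maps the exterior
of `(w, x)` into `[u, v]`, so the generators play ping-pong on the boundary circle `ℝ ∪ {∞}` of
`ℍ` with non-overlapping closed intervals. A nontrivial element of `G` is conjugate to a cyclically
reduced word, which maps the interval of its first letter into itself and hence has a fixed point
there by the intermediate value theorem. So every element of `G` has a fixed point on the boundary
circle, whereas a noncentral element with a fixed point in `ℍ` is elliptic and has none.
-/

open Matrix Matrix.SpecialLinearGroup OnePoint Set
open scoped MatrixGroups

section PingPong

variable {ι X K : Type*} [Group K] [MulAction K X]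

/-- A family `F` of group elements *plays ping-pong* with a family of sets `I` if, for every `i`,
`F i` maps every set except `I (i, false)` into `I (i, true)` and `(F i)⁻¹` maps every set except
`I (i, true)` into `I (i, false)`. The sets are indexed by the letters of the free group on `ι`, so
that the hypotheses match its reduced words; they need not be disjoint. -/
structure IsPingPong (F : ι → K) (I : ι × Bool → Set X) : Prop where
  mapsTo_smul : ∀ i t, t ≠ (i, false) → MapsTo (F i • ·) (I t) (I (i, true))
  mapsTo_inv_smul : ∀ i t, t ≠ (i, true) → MapsTo ((F i)⁻¹ • ·) (I t) (I (i, false))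

namespace IsPingPong

variable {F : ι → K} {I : ι × Bool → Set X}

theorem mapsTo_lift_singleton (h : IsPingPong F I) {s t : ι × Bool} (hst : s.1 = t.1 → s.2 = t.2) :
    MapsTo (FreeGroup.lift F (FreeGroup.mk [s]) • ·) (I t) (I s) := by
  obtain ⟨i, _ | _⟩ := s
  · simpa using h.mapsTo_inv_smul i t (by rintro rfl; simp at hst)
  · simpa using h.mapsTo_smul i t (by rintro rfl; simp at hst)

theorem mapsTo_lift_cons (h : IsPingPong F I) {s p : ι × Bool} {L : List (ι × Bool)}
    (hL : FreeGroup.IsReduced (s :: L ++ [p])) :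
    MapsTo (FreeGroup.lift F (FreeGroup.mk (s :: L)) • ·) (I p) (I s) := by
  induction L generalizing s with
  | nil => exact h.mapsTo_lift_singleton (FreeGroup.isReduced_cons_cons.1 hL).1
  | cons t L ih =>
    obtain ⟨hst, htL⟩ := FreeGroup.isReduced_cons_cons.1 hL
    have hmul : FreeGroup.mk (s :: t :: L) = FreeGroup.mk [s] * FreeGroup.mk (t :: L) := by
      rw [FreeGroup.mul_mk, List.singleton_append]
    simp only [hmul, map_mul, mul_smul]
    exact (h.mapsTo_lift_singleton hst).comp (ih htL)

theorem mapsTo_lift_of_isCyclicallyReduced (h : IsPingPong F I) {s : ι × Bool}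
    {L : List (ι × Bool)} (hL : FreeGroup.IsCyclicallyReduced (s :: L)) :
    MapsTo (FreeGroup.lift F (FreeGroup.mk (s :: L)) • ·) (I s) (I s) := by
  refine h.mapsTo_lift_cons (hL.isReduced.append FreeGroup.IsReduced.singleton ?_)
  simpa using hL.2

end IsPingPong

theorem exists_eq_conj_mk_isCyclicallyReduced (w : FreeGroup ι) :
    ∃ (k : FreeGroup ι) (L : List (ι × Bool)),
      FreeGroup.IsCyclicallyReduced L ∧ w = k * FreeGroup.mk L * k⁻¹ := by
  classical
  refine ⟨FreeGroup.mk (FreeGroup.reduceCyclically.conjugator w.toWord), _,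
    FreeGroup.reduceCyclically.isCyclicallyReduced (FreeGroup.isReduced_toWord (x := w)), ?_⟩
  rw [FreeGroup.inv_mk, FreeGroup.mul_mk, FreeGroup.mul_mk,
    FreeGroup.reduceCyclically.conj_conjugator_reduceCyclically, FreeGroup.mk_toWord]

theorem IsPingPong.exists_smul_eq_self [Nonempty X] {F : ι → K} {I : ι × Bool → Set X}
    (h : IsPingPong F I)
    (hfix : ∀ (s : ι × Bool) (k : K), MapsTo (k • ·) (I s) (I s) → ∃ x : X, k • x = x)
    {g : K} (hg : g ∈ Subgroup.closure (range F)) : ∃ x : X, g • x = x := by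
  rw [← FreeGroup.range_lift_eq_closure] at hg
  obtain ⟨w, rfl⟩ := hg
  obtain ⟨k, L, hL, rfl⟩ := exists_eq_conj_mk_isCyclicallyReduced w
  obtain ⟨x, hx⟩ : ∃ x : X, FreeGroup.lift F (FreeGroup.mk L) • x = x := by
    cases L with
    | nil => exact ⟨Classical.arbitrary X, one_smul K _⟩
    | cons s L => exact hfix s _ (h.mapsTo_lift_of_isCyclicallyReduced hL)
  exact ⟨FreeGroup.lift F k • x, by simp only [map_mul, map_inv, mul_smul, inv_smul_smul, hx]⟩

end PingPong

section BoundaryFixedPoints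

theorem exists_smul_eq_self_of_mapsTo_Icc {g : GL (Fin 2) ℝ} {l r : ℝ} (hlr : l ≤ r)
    (hg : MapsTo (g • ·) ((↑) '' Icc l r : Set (OnePoint ℝ)) ((↑) '' Icc l r)) :
    ∃ x : OnePoint ℝ, g • x = x := by
  have hg' : ∀ y ∈ Icc l r, g 1 0 * y + g 1 1 ≠ 0 ∧
      (g 0 0 * y + g 0 1) / (g 1 0 * y + g 1 1) ∈ Icc l r := by
    intro y hy
    have hmem := hg (mem_image_of_mem _ hy)
    by_cases h0 : g 1 0 * y + g 1 1 = 0 <;> simp_all [smul_some_eq_ite]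
  obtain ⟨y, hy, hfix⟩ := exists_mem_Icc_isFixedPt_of_mapsTo
    (f := fun y ↦ (g 0 0 * y + g 0 1) / (g 1 0 * y + g 1 1))
    (ContinuousOn.div (by fun_prop) (by fun_prop) fun y hy ↦ (hg' y hy).1) hlr
    fun y hy ↦ (hg' y hy).2
  exact ⟨y, by rw [smul_some_eq_ite, if_neg (hg' y hy).1, hfix.eq]⟩

theorem mem_center_of_smul_eq_self {g : GL (Fin 2) ℝ} (hdet : 0 < g.val.det)
    {z : UpperHalfPlane} (hz : g • z = z) {x : OnePoint ℝ} (hx : g • x = x) :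
    g ∈ Subgroup.center (GL (Fin 2) ℝ) := by
  by_contra hg
  exact (UpperHalfPlane.isElliptic_of_exists_smul_eq_self hdet hg ⟨z, hz⟩).smul_ne_self x hx

theorem eq_one_or_eq_neg_one_of_mapGL_mem_center {γ : SL(2, ℝ)}
    (hγ : mapGL ℝ γ ∈ Subgroup.center (GL (Fin 2) ℝ)) :
    (γ : Matrix (Fin 2) (Fin 2) ℝ) = 1 ∨ (γ : Matrix (Fin 2) (Fin 2) ℝ) = -1 := by
  rw [GeneralLinearGroup.mem_center_iff_val_mem_range_scalar] at hγ
  obtain ⟨a, ha⟩ := hγ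
  replace ha : scalar (Fin 2) a = γ.val := ha
  have hdet : a ^ 2 = 1 := by simpa [← ha, sq] using γ.det_coe
  rcases sq_eq_one_iff.1 hdet with rfl | rfl
  · exact .inl (by rw [← ha, map_one])
  · exact .inr (by rw [← ha, map_neg, map_one])

end BoundaryFixedPoints

section CirclePairing

theorem neg_smul_onePoint {k : Type*} [Field k] [DecidableEq k] (g : GL (Fin 2) k)
    (x : OnePoint k) : -g • x = g • x := by
  cases x with
  | infty => simp [smul_infty_eq_ite]
  | coe y =>
    have hnum : -g.val 0 0 * y + -g.val 0 1 = -(g.val 0 0 * y + g.val 0 1) := by ring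
    have hdenom : -g.val 1 0 * y + -g.val 1 1 = -(g.val 1 0 * y + g.val 1 1) := by ring
    simp only [smul_some_eq_ite, Units.val_neg, Matrix.neg_apply, hnum, hdenom, neg_eq_zero,
      neg_div_neg_eq]

theorem smul_coe_of_val_eq_smul {k : Type*} [Field k] [DecidableEq k] {g : GL (Fin 2) k}
    {t p q s y : k} (hg : g.val = t • !![q, -(p * q + s); 1, -p]) (hy : y ≠ p) :
    g • (y : OnePoint k) = ↑(q - s / (y - p)) := by
  have ht : t ≠ 0 := by
    rintro rfl
    exact g.det_ne_zero (by simp [hg])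
  have hy' : y - p ≠ 0 := sub_ne_zero.2 hy
  have hdenom : g.val 1 0 * y + g.val 1 1 = t * (y - p) := by
    simp only [hg, Matrix.smul_apply, of_apply, cons_val', cons_val_zero, cons_val_fin_one,
      cons_val_one, smul_eq_mul]
    ring
  have hnum : g.val 0 0 * y + g.val 0 1 = t * (q * (y - p) - s) := by
    simp only [hg, Matrix.smul_apply, of_apply, cons_val', cons_val_zero, cons_val_fin_one,
      cons_val_one, smul_eq_mul]
    ring
  rw [smul_some_eq_ite, hdenom, hnum, if_neg (mul_ne_zero ht hy'), mul_div_mul_left _ _ ht,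
    sub_div, mul_div_cancel_right₀ _ hy']

variable {u v w x : ℝ}

theorem TMat_mul_TMat_swap (huv : u < v) (hwx : w < x) :
    TMat u v w x * TMat w x u v = -1 := by
  have hpos : 0 < (v - u) / 2 * ((x - w) / 2) := by
    have := sub_pos.2 huv
    have := sub_pos.2 hwx
    positivity
  have hmul (p q s : ℝ) :
      !![q, -(p * q + s); 1, -p] * !![p, -(q * p + s); 1, -q] = -s • (1 : Matrix _ _ ℝ) := by
    simp only [mul_fin_two, one_fin_two, smul_of, smul_cons, Matrix.smul_empty, smul_eq_mul]
    ring_nf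
  rw [TMat, TMat, mul_comm ((x - w) / 2), smul_mul_smul_comm, hmul, smul_smul, div_mul_div_comm,
    Real.mul_self_sqrt hpos.le, mul_neg, one_mul, one_div_mul_cancel hpos.ne', neg_one_smul]

/-- The element of `GL(2, ℝ)` with matrix `TMat u v w x`, which maps the exterior of `(u, v)` in
`ℝ ∪ {∞}` onto `[w, x]`. -/
noncomputable def circlePairing (huv : u < v) (hwx : w < x) : GL (Fin 2) ℝ where
  val := TMat u v w x
  inv := -TMat w x u v
  val_inv := by rw [mul_neg, TMat_mul_TMat_swap huv hwx, neg_neg]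
  inv_val := by rw [neg_mul, TMat_mul_TMat_swap hwx huv, neg_neg]

theorem inv_circlePairing (huv : u < v) (hwx : w < x) :
    (circlePairing huv hwx)⁻¹ = -circlePairing hwx huv :=
  Units.ext rfl

theorem circlePairing_smul_coe (huv : u < v) (hwx : w < x) {y : ℝ} (hy : y ≠ (u + v) / 2) :
    circlePairing huv hwx • (y : OnePoint ℝ) =
      ↑((w + x) / 2 - (v - u) / 2 * ((x - w) / 2) / (y - (u + v) / 2)) :=
  smul_coe_of_val_eq_smul rfl hy

theorem sub_mul_div_mem_closedBall {p q ρ σ y : ℝ} (hρ : 0 < ρ) (hσ : 0 ≤ σ)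
    (hy : y ∉ Metric.ball p ρ) : q - ρ * σ / (y - p) ∈ Metric.closedBall q σ := by
  rw [Metric.mem_ball, Real.dist_eq, not_lt] at hy
  rw [Metric.mem_closedBall, Real.dist_eq, sub_sub_cancel_left, abs_neg, abs_div,
    abs_of_nonneg (by positivity), div_le_iff₀ (hρ.trans_le hy), mul_comm]
  gcongr

theorem mapsTo_circlePairing_smul (huv : u < v) (hwx : w < x) :
    MapsTo (circlePairing huv hwx • ·) ((↑) '' (Ioo u v)ᶜ : Set (OnePoint ℝ))
      ((↑) '' Icc w x) := by
  rintro _ ⟨y, hy, rfl⟩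
  have hne : y ≠ (u + v) / 2 := by
    rintro rfl
    exact hy ⟨by linarith, by linarith⟩
  refine ⟨_, ?_, (circlePairing_smul_coe huv hwx hne).symm⟩
  rw [Real.Icc_eq_closedBall]
  rw [mem_compl_iff, Real.Ioo_eq_ball] at hy
  exact sub_mul_div_mem_closedBall (by linarith) (by linarith) hy

theorem mapsTo_inv_circlePairing_smul (huv : u < v) (hwx : w < x) :
    MapsTo ((circlePairing huv hwx)⁻¹ • ·) ((↑) '' (Ioo w x)ᶜ : Set (OnePoint ℝ))
      ((↑) '' Icc u v) := by
  simpa only [inv_circlePairing, neg_smul_onePoint] using mapsTo_circlePairing_smul hwx huv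

end CirclePairing

section Schottky

variable {ι : Type*} {l r : ι × Bool → ℝ}

theorem Icc_subset_compl_Ioo {α : Type*} [Preorder α] {a b c d : α} (h : b ≤ c ∨ d ≤ a) :
    Icc a b ⊆ (Ioo c d)ᶜ := fun _ hy hy' ↦
  h.elim (fun hbc ↦ (hy.2.trans hbc).not_gt hy'.1) fun hda ↦ (hda.trans hy.1).not_gt hy'.2

theorem isPingPong_circlePairing (hlr : ∀ s, l s < r s)
    (hsep : Pairwise fun s t ↦ r s ≤ l t ∨ r t ≤ l s) :
    IsPingPong (fun i ↦ circlePairing (hlr (i, false)) (hlr (i, true)))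
      (fun s ↦ ((↑) '' Icc (l s) (r s) : Set (OnePoint ℝ))) where
  mapsTo_smul _ _ ht := (mapsTo_circlePairing_smul _ _).mono_left
    (image_mono (Icc_subset_compl_Ioo (hsep ht)))
  mapsTo_inv_smul _ _ ht := (mapsTo_inv_circlePairing_smul _ _).mono_left
    (image_mono (Icc_subset_compl_Ioo (hsep ht)))

theorem eq_one_or_eq_neg_one_of_mem_closure_TMat (hlr : ∀ s, l s < r s)
    (hsep : Pairwise fun s t ↦ r s ≤ l t ∨ r t ≤ l s) {γ : SL(2, ℝ)}
    (hγ : γ ∈ Subgroup.closure {g : SL(2, ℝ) | ∃ i,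
      g.val = TMat (l (i, false)) (r (i, false)) (l (i, true)) (r (i, true))})
    {z : UpperHalfPlane} (hz : γ • z = z) :
    (γ : Matrix (Fin 2) (Fin 2) ℝ) = 1 ∨ (γ : Matrix (Fin 2) (Fin 2) ℝ) = -1 := by
  have hmem : mapGL ℝ γ ∈ Subgroup.closure
      (range fun i ↦ circlePairing (hlr (i, false)) (hlr (i, true))) := by
    have hmap := Subgroup.mem_map_of_mem (mapGL ℝ) hγ
    rw [MonoidHom.map_closure] at hmap
    refine Subgroup.closure_mono ?_ hmap
    rintro _ ⟨g, ⟨i, hg⟩, rfl⟩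
    exact ⟨i, Units.ext hg.symm⟩
  obtain ⟨x, hx⟩ := (isPingPong_circlePairing hlr hsep).exists_smul_eq_self
    (fun s _ ↦ exists_smul_eq_self_of_mapsTo_Icc (hlr s).le) hmem
  exact eq_one_or_eq_neg_one_of_mapGL_mem_center
    (mem_center_of_smul_eq_self (by simp) hz hx)

end Schottky

section Chain

variable {ι : Type*}

/-- An endpoint of the interval attached to each letter, the lower one for the parameters
`a b c d` and the upper one for `b c d e`. The inner `Bool` is `false` for `f_n` and `true` for
`g_n`; the outer one is `false` for the source interval and `true` for the target interval. -/
def letterEndpoint (p₀ p₁ p₂ p₃ : ι → ℝ) : (ι × Bool) × Bool → ℝ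
  | ((n, false), false) => p₀ n
  | ((n, true), false) => p₁ n
  | ((n, false), true) => p₂ n
  | ((n, true), true) => p₃ n

theorem letterEndpoint_lt {a b c d e : ι → ℝ}
    (h : ∀ n, a n < b n ∧ b n < c n ∧ c n < d n ∧ d n < e n) (s : (ι × Bool) × Bool) :
    letterEndpoint a b c d s < letterEndpoint b c d e s := by
  obtain ⟨⟨n, _ | _⟩, _ | _⟩ := s <;> grind [letterEndpoint]

theorem letterEndpoint_bounds {a b c d e : ι → ℝ}
    (h : ∀ n, a n < b n ∧ b n < c n ∧ c n < d n ∧ d n < e n) (s : (ι × Bool) × Bool) :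
    a s.1.1 ≤ letterEndpoint a b c d s ∧ letterEndpoint b c d e s ≤ e s.1.1 := by
  obtain ⟨⟨n, _ | _⟩, _ | _⟩ := s <;> grind [letterEndpoint]

theorem pairwise_letterEndpoint_le {a b c d e : ι → ℝ}
    (h : ∀ n, a n < b n ∧ b n < c n ∧ c n < d n ∧ d n < e n)
    (hsep : Pairwise fun m n ↦ e m ≤ a n ∨ e n ≤ a m) :
    Pairwise fun s t ↦ letterEndpoint b c d e s ≤ letterEndpoint a b c d t ∨
      letterEndpoint b c d e t ≤ letterEndpoint a b c d s := by
  intro s t hst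
  rcases eq_or_ne s.1.1 t.1.1 with heq | hne
  · obtain ⟨⟨n, _ | _⟩, _ | _⟩ := s <;> obtain ⟨⟨m, _ | _⟩, _ | _⟩ := t <;>
      grind [letterEndpoint]
  · obtain ⟨has, hse⟩ := letterEndpoint_bounds h s
    obtain ⟨hat, hte⟩ := letterEndpoint_bounds h t
    exact (hsep hne).imp (fun hle ↦ hse.trans (hle.trans hat)) fun hle ↦ hte.trans (hle.trans has)

theorem pairwise_le_of_le_succ {α : Type*} [Preorder α] {a e : ℤ → α} (hae : ∀ n, a n ≤ e n)
    (hea : ∀ n, e n ≤ a (n + 1)) : Pairwise fun m n ↦ e m ≤ a n ∨ e n ≤ a m := by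
  have hmono : Monotone a := monotone_int_of_le_succ fun n ↦ (hae n).trans (hea n)
  exact fun m n hmn ↦ hmn.lt_or_gt.imp (fun h ↦ (hea m).trans (hmono h))
    fun h ↦ (hea n).trans (hmono h)

end Chain

theorem stmt15_general {ι : Type*} {a b c d e : ι → ℝ}
    (h : ∀ n, a n < b n ∧ b n < c n ∧ c n < d n ∧ d n < e n)
    (hsep : Pairwise fun m n ↦ e m ≤ a n ∨ e n ≤ a m) {γ : SL(2, ℝ)}
    (hγ : γ ∈ Subgroup.closure {g : SL(2, ℝ) | ∃ n,
      g.val = TMat (a n) (b n) (c n) (d n) ∨ g.val = TMat (b n) (c n) (d n) (e n)})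
    {z : UpperHalfPlane} (hz : γ • z = z) :
    (γ : Matrix (Fin 2) (Fin 2) ℝ) = 1 ∨ (γ : Matrix (Fin 2) (Fin 2) ℝ) = -1 := by
  refine eq_one_or_eq_neg_one_of_mem_closure_TMat (letterEndpoint_lt h)
    (pairwise_letterEndpoint_le h hsep) (Subgroup.closure_mono ?_ hγ) hz
  rintro g ⟨n, hf | hg⟩
  · exact ⟨(n, false), hf⟩
  · exact ⟨(n, true), hg⟩

/-- the group `G` generated by the `f_n` and `g_n` acts freely
modulo center on the upper half-plane: if `γ ∈ G` fixes a point of `ℍ`, then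
`γ = I` or `γ = −I`. -/
theorem stmt15 (a b c d e : ℤ → ℝ)
    (h : ∀ n : ℤ, a n < b n ∧ b n < c n ∧ c n < d n ∧ d n < e n ∧ e n ≤ a (n + 1))
    (G : Subgroup (Matrix.SpecialLinearGroup (Fin 2) ℝ))
    (hG : G = Subgroup.closure
      {g : Matrix.SpecialLinearGroup (Fin 2) ℝ | ∃ n : ℤ,
        (g : Matrix (Fin 2) (Fin 2) ℝ) = TMat (a n) (b n) (c n) (d n) ∨
        (g : Matrix (Fin 2) (Fin 2) ℝ) = TMat (b n) (c n) (d n) (e n)}) :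
    ∀ γ : Matrix.SpecialLinearGroup (Fin 2) ℝ, γ ∈ G →
      ∀ z : UpperHalfPlane, γ • z = z →
        (γ : Matrix (Fin 2) (Fin 2) ℝ) = 1 ∨ (γ : Matrix (Fin 2) (Fin 2) ℝ) = -1 := by
  subst hG
  have hsep := pairwise_le_of_le_succ (fun n ↦ by linarith [h n]) fun n ↦ (h n).2.2.2.2
  exact fun γ hγ z hz ↦ stmt15_general (fun n ↦ by simp [h n]) hsep hγ hz
end
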